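/- arXiv:1907.03088 — 6 statements merged into one kernel-verified Lean document; each statement's English description precedes it below -/
import Mathlib

section
/- Let 0 < α < 1. Then for every real number x, the Mittag-Leffler function value E_{α,1}(x) = ∑_{j=0}^∞ x^j / Γ(αj + 1) is strictly positive. In particular, for every ρ ∈ ℝ and t ≥ 0 one has E_{α,1}(ρ t^α) ≠ 0, so the scalar solution operator S_α(t) = E_{α,1}(ρ t^α) is invertible. -/
/-!
For `x ≥ 0` the series has nonnegative terms and leading term `1`. On the negative axis the proof
is a minimum principle for the Caputo derivative of order `α`. The function
`u s = E_{α,1} (y * s ^ α)` satisfies `D^α u = y u`, and evaluating the Marchaud form of `D^α u`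
at `s = 1` gives (`marchaud_mlf`)

`α ∫₀¹ (u 1 - u s) (1 - s)^(-α-1) ds = 1 - u 1 + Γ(1 - α) * y * u 1`.

This is checked termwise on the power series, where it reduces to the Beta integral
(`kernel_integral`). If `E_{α,1}` took a nonpositive value at some `-z < 0`, let `y` be a point of
`[-z, 0]` at which it is minimal, so that `E_{α,1} y ≤ 0`. The points `y * s ^ α` stay in `[y, 0]`,
so the integrand is nonpositive, whereas the right-hand side is at least `1`.
-/

/-- The (real) Mittag-Leffler function `E_{α,β}(x) = ∑_{j=0}^∞ x^j / Γ(αj + β)`. -/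
noncomputable def mlf (α β x : ℝ) : ℝ := ∑' j : ℕ, x ^ j / Real.Gamma (α * j + β)

open MeasureTheory Set

/-- Cutting the Gamma integral off at `T` shows that `Γ` grows faster than any geometric
sequence. -/
lemma rpow_mul_exp_le_Gamma {T s : ℝ} (hT : 0 < T) (hs : 0 ≤ s) :
    T ^ s * Real.exp (-T) ≤ Real.Gamma (s + 1) := by
  have hint := Real.GammaIntegral_convergent (s := s + 1) (by linarith)
  rw [Real.Gamma_eq_integral (by linarith)]
  calc T ^ s * Real.exp (-T) = ∫ x in Ioi T, T ^ s * Real.exp (-x) := by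
        rw [integral_const_mul, integral_exp_neg_Ioi]
    _ ≤ ∫ x in Ioi T, Real.exp (-x) * x ^ (s + 1 - 1) := by
        refine setIntegral_mono_on ((integrableOn_exp_neg_Ioi T).const_mul _)
          (hint.mono_set (Ioi_subset_Ioi hT.le)) measurableSet_Ioi fun x hx => ?_
        rw [add_sub_cancel_right, mul_comm]
        have : T ≤ x := le_of_lt hx
        gcongr
    _ ≤ _ := by
        refine setIntegral_mono_set hint ?_ (Ioi_subset_Ioi hT.le).eventuallyLE
        refine ae_restrict_of_forall_mem measurableSet_Ioi fun x hx => ?_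
        have : 0 < x := hx
        positivity

lemma mlf_denom_pos {α : ℝ} (hα0 : 0 < α) (j : ℕ) : 0 < Real.Gamma (α * j + 1) :=
  Real.Gamma_pos_of_pos (by positivity)

lemma summable_mlf_abs {α : ℝ} (hα0 : 0 < α) (x : ℝ) :
    Summable fun j : ℕ => |x| ^ j / Real.Gamma (α * j + 1) := by
  -- the cutoff is chosen with `T ^ α = 2 * (|x| + 1)`, so that the terms decay like `(1 / 2) ^ j`
  set T : ℝ := (2 * (|x| + 1)) ^ (α⁻¹) with hT
  have hT0 : 0 < T := by positivity
  have hTα : T ^ α = 2 * (|x| + 1) := Real.rpow_inv_rpow (by positivity) hα0.ne'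
  refine Summable.of_nonneg_of_le (fun j => div_nonneg (by positivity) (mlf_denom_pos hα0 j).le)
    (fun j => ?_) ((summable_geometric_of_lt_one (r := 1 / 2) (by norm_num)
      (by norm_num)).mul_left (Real.exp T))
  have h := rpow_mul_exp_le_Gamma hT0 (s := α * j) (by positivity)
  rw [Real.rpow_mul hT0.le, hTα, Real.rpow_natCast] at h
  rw [div_le_iff₀ (mlf_denom_pos hα0 j)]
  calc |x| ^ j ≤ (|x| + 1) ^ j := by gcongr; linarith
    _ = Real.exp T * (1 / 2) ^ j * ((2 * (|x| + 1)) ^ j * Real.exp (-T)) := by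
        rw [Real.exp_neg, mul_pow, one_div, inv_pow]
        field_simp
    _ ≤ _ := by gcongr

lemma summable_mlf {α : ℝ} (hα0 : 0 < α) (x : ℝ) :
    Summable fun j : ℕ => x ^ j / Real.Gamma (α * j + 1) := by
  refine Summable.of_norm ((summable_mlf_abs hα0 x).congr fun j => ?_)
  rw [norm_div, norm_pow, Real.norm_eq_abs, Real.norm_of_nonneg (mlf_denom_pos hα0 j).le]

lemma continuousOn_mlf {α : ℝ} (hα0 : 0 < α) (z : ℝ) :
    ContinuousOn (mlf α 1) (Icc (-z) 0) := by
  unfold mlf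
  refine continuousOn_tsum (fun j => by fun_prop) (summable_mlf_abs hα0 z) fun j x hx => ?_
  rw [norm_div, norm_pow, Real.norm_eq_abs, Real.norm_of_nonneg (mlf_denom_pos hα0 j).le]
  have : |x| ≤ |z| := by
    rw [abs_of_nonpos hx.2]; exact (by linarith [hx.1] : -x ≤ z).trans (le_abs_self z)
  have := mlf_denom_pos hα0 j
  gcongr

lemma beta_integral_real {p q : ℝ} (hp : 0 < p) (hq : 0 < q) :
    IntervalIntegrable (fun s : ℝ => s ^ (p - 1) * (1 - s) ^ (q - 1)) volume 0 1 ∧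
    ∫ s in (0 : ℝ)..1, s ^ (p - 1) * (1 - s) ^ (q - 1) =
      Real.Gamma p * Real.Gamma q / Real.Gamma (p + q) := by
  have hc := Complex.betaIntegral_convergent (u := p) (v := q) (by simpa) (by simpa)
  have heq : ∀ s ∈ Ioc (0 : ℝ) 1, (s : ℂ) ^ ((p : ℂ) - 1) * (1 - (s : ℂ)) ^ ((q : ℂ) - 1) =
      ((s ^ (p - 1) * (1 - s) ^ (q - 1) : ℝ) : ℂ) := by
    intro s hs
    rw [Complex.ofReal_mul, Complex.ofReal_cpow hs.1.le, Complex.ofReal_cpow (by linarith [hs.2])]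
    push_cast
    rfl
  constructor
  · rw [intervalIntegrable_iff_integrableOn_Ioc_of_le zero_le_one] at hc ⊢
    have := (hc.congr_fun heq measurableSet_Ioc).re
    simpa [IntegrableOn] using this
  · have h := ProbabilityTheory.beta_eq_betaIntegralReal p q hp hq
    rw [ProbabilityTheory.beta] at h
    rw [h, Complex.betaIntegral, intervalIntegral.integral_of_le zero_le_one,
      intervalIntegral.integral_of_le zero_le_one,
      setIntegral_congr_fun measurableSet_Ioc heq, integral_complex_ofReal, Complex.ofReal_re]

lemma one_sub_rpow_le {p s : ℝ} (hp : 0 ≤ p) (hs0 : 0 < s) (hs1 : s ≤ 1) :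
    1 - s ^ p ≤ (p + 1) * (1 - s) := by
  have h1 := one_add_mul_self_le_rpow_one_add (s := s - 1) (by linarith) (p := p + 1) (by linarith)
  have h2 : s ^ (p + 1) ≤ s ^ p := Real.rpow_le_rpow_of_exponent_ge hs0 hs1 (by linarith)
  rw [add_sub_cancel] at h1
  linarith

/-- The bound behind integrability of the Marchaud kernel: `1 - s ^ p` vanishes to first order at
`s = 1`. -/
lemma kernel_le {α p s : ℝ} (hp : 0 ≤ p) (hs0 : 0 < s) (hs1 : s < 1) :
    (1 - s ^ p) * (1 - s) ^ (-α - 1) ≤ (p + 1) * (1 - s) ^ (-α) := by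
  have h : (0 : ℝ) < 1 - s := by linarith
  calc (1 - s ^ p) * (1 - s) ^ (-α - 1) ≤ (p + 1) * (1 - s) * (1 - s) ^ (-α - 1) := by
        gcongr; exact one_sub_rpow_le hp hs0 hs1.le
    _ = (p + 1) * (1 - s) ^ (-α) := by
        rw [Real.rpow_sub_one h.ne']; field_simp

lemma kernel_nonneg {α p s : ℝ} (hp : 0 ≤ p) (hs0 : 0 < s) (hs1 : s ≤ 1) :
    0 ≤ (1 - s ^ p) * (1 - s) ^ (-α - 1) :=
  mul_nonneg (by linarith [Real.rpow_le_one hs0.le hs1 hp])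
    (Real.rpow_nonneg (by linarith) _)

lemma kernel_integrable {α p : ℝ} (hα1 : α < 1) (hp : 0 ≤ p) :
    IntegrableOn (fun s : ℝ => (1 - s ^ p) * (1 - s) ^ (-α - 1)) (Ioc 0 1) := by
  have h : IntervalIntegrable (fun s : ℝ => (1 - s) ^ (-α)) volume 0 1 := by
    simpa using ((intervalIntegral.intervalIntegrable_rpow' (r := -α) (a := 0) (b := 1)
      (by linarith)).comp_sub_left 1).symm
  rw [intervalIntegrable_iff_integrableOn_Ioo_of_le zero_le_one] at h
  rw [integrableOn_Ioc_iff_integrableOn_Ioo]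
  refine (h.const_mul (p + 1)).mono' (by fun_prop) ?_
  refine ae_restrict_of_forall_mem measurableSet_Ioo fun s hs => ?_
  rw [Real.norm_of_nonneg (kernel_nonneg hp hs.1 hs.2.le)]
  exact kernel_le hp hs.1 hs.2

/-- The Marchaud integral of `s ^ p` at `s = 1`, obtained by integrating the derivative of
`(1 - s ^ p) * (1 - s) ^ (-α)`, which for `p > 0` runs from `1` at `s = 0` to `0` at `s = 1`;
for `p = 0` both sides vanish. -/
lemma kernel_integral {α p : ℝ} (hα1 : α < 1) (hp : 0 ≤ p) :
    α * ∫ s in Ioc (0 : ℝ) 1, (1 - s ^ p) * (1 - s) ^ (-α - 1) =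
      Real.Gamma (p + 1) * Real.Gamma (1 - α) / Real.Gamma (p + (1 - α)) - 1 := by
  rcases hp.eq_or_lt with rfl | hp
  · have := (Real.Gamma_pos_of_pos (s := 1 - α) (by linarith)).ne'
    simp [this]
  obtain ⟨hbi, hb⟩ := beta_integral_real hp (q := 1 - α) (by linarith)
  rw [show 1 - α - 1 = -α by ring] at hbi hb
  have hk := kernel_integrable hα1 hp.le
  rw [← intervalIntegrable_iff_integrableOn_Ioc_of_le zero_le_one] at hk
  rw [← intervalIntegral.integral_of_le zero_le_one]
  have hd : ∀ s ∈ Ioo (0 : ℝ) 1, HasDerivAt (fun s : ℝ => (1 - s ^ p) * (1 - s) ^ (-α))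
      (α * ((1 - s ^ p) * (1 - s) ^ (-α - 1)) - p * (s ^ (p - 1) * (1 - s) ^ (-α))) s := by
    intro s hs
    have h1 : HasDerivAt (fun s : ℝ => 1 - s ^ p) (-(p * s ^ (p - 1))) s :=
      (Real.hasDerivAt_rpow_const (Or.inl hs.1.ne')).const_sub 1
    have h2 : HasDerivAt (fun s : ℝ => (1 - s) ^ (-α)) (-1 * (-α) * (1 - s) ^ (-α - 1)) s :=
      ((hasDerivAt_id s).const_sub 1).rpow_const (Or.inl (by simp; linarith [hs.2]))
    refine (h1.mul h2).congr_deriv ?_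
    ring
  have hcont : ContinuousOn (fun s : ℝ => (1 - s ^ p) * (1 - s) ^ (-α)) (Icc 0 1) := by
    intro s hs
    rcases hs.2.eq_or_lt with rfl | hs1
    · -- at the right endpoint the function is squeezed below `(p + 1) * (1 - s) ^ (1 - α)`
      have hg : ContinuousAt (fun s : ℝ => (p + 1) * (1 - s) ^ (1 - α)) 1 :=
        continuousAt_const.mul ((continuousAt_const.sub continuousAt_id).rpow_const
          (Or.inr (by linarith)))
      have hg0 : Filter.Tendsto (fun s : ℝ => (p + 1) * (1 - s) ^ (1 - α))
          (nhdsWithin 1 (Icc 0 1)) (nhds 0) := by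
        have := hg.tendsto.mono_left (nhdsWithin_le_nhds (s := Icc 0 1))
        rwa [sub_self, Real.zero_rpow (by linarith), mul_zero] at this
      have hev : ∀ᶠ s : ℝ in nhdsWithin 1 (Icc 0 1), 0 < s ∧ s ≤ 1 := by
        filter_upwards [self_mem_nhdsWithin,
          nhdsWithin_le_nhds (Ioi_mem_nhds (zero_lt_one' ℝ))] with s hs h0
        exact ⟨h0, hs.2⟩
      rw [ContinuousWithinAt]
      simp only [Real.one_rpow, sub_self, zero_mul]
      refine tendsto_of_tendsto_of_tendsto_of_le_of_le' tendsto_const_nhds hg0 ?_ ?_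
      · filter_upwards [hev] with s hs
        exact mul_nonneg (by linarith [Real.rpow_le_one hs.1.le hs.2 hp.le])
          (Real.rpow_nonneg (by linarith) _)
      · filter_upwards [hev] with s hs
        rcases hs.2.eq_or_lt with rfl | h1
        · simp [Real.zero_rpow (by linarith : 1 - α ≠ 0)]
        have h : (0 : ℝ) < 1 - s := by linarith
        calc (1 - s ^ p) * (1 - s) ^ (-α) ≤ (p + 1) * (1 - s) * (1 - s) ^ (-α) := by
              gcongr; exact one_sub_rpow_le hp.le hs.1 hs.2
          _ = (p + 1) * (1 - s) ^ (1 - α) := by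
              rw [sub_eq_add_neg 1 α, Real.rpow_add h, Real.rpow_one, mul_assoc]
    · refine ContinuousAt.continuousWithinAt (ContinuousAt.mul ?_ ?_)
      · exact continuousAt_const.sub (continuousAt_id.rpow_const (Or.inr hp.le))
      · exact (continuousAt_const.sub continuousAt_id).rpow_const
          (Or.inl (by simp; linarith))
  have hftc := intervalIntegral.integral_eq_sub_of_hasDerivAt_of_le zero_le_one hcont hd
    ((hk.const_mul α).sub (hbi.const_mul p))
  rw [intervalIntegral.integral_sub (hk.const_mul α) (hbi.const_mul p),
    intervalIntegral.integral_const_mul, intervalIntegral.integral_const_mul, hb] at hftc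
  simp only [Real.one_rpow, sub_self, zero_mul, Real.zero_rpow hp.ne', sub_zero, mul_one] at hftc
  rw [Real.Gamma_add_one hp.ne']
  linear_combination hftc

/-- The series of `E_{α,1-α}`, which is the termwise Caputo derivative of `E_{α,1}` up to the
`j = 0` term. -/
lemma hasSum_shifted {α : ℝ} (hα0 : 0 < α) (y : ℝ) :
    HasSum (fun j : ℕ => y ^ j / Real.Gamma (α * j + (1 - α)))
      (y * mlf α 1 y + 1 / Real.Gamma (1 - α)) := by
  have h := ((summable_mlf hα0 y).hasSum.mul_left y)
  have h2 : HasSum (fun j : ℕ => y ^ (j + 1) / Real.Gamma (α * (j + 1 : ℕ) + (1 - α)))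
      (y * mlf α 1 y) := by
    refine h.congr_fun fun j => ?_
    rw [pow_succ']
    push_cast
    rw [show α * ((j : ℝ) + 1) + (1 - α) = α * j + 1 by ring, mul_div_assoc]
  simpa using (hasSum_nat_add_iff (f := fun j : ℕ => y ^ j / Real.Gamma (α * j + (1 - α))) 1).1 h2

/-- The equation `D^α u = y u` for `u s = E_{α,1} (y * s ^ α)` at `s = 1`, with the Caputo
derivative in Marchaud form. -/
lemma marchaud_mlf {α : ℝ} (hα0 : 0 < α) (hα1 : α < 1) (y : ℝ) :
    α * ∫ s in Ioc (0 : ℝ) 1, (mlf α 1 y - mlf α 1 (y * s ^ α)) * (1 - s) ^ (-α - 1) =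
      1 - mlf α 1 y + Real.Gamma (1 - α) * (y * mlf α 1 y) := by
  have hG : 0 < Real.Gamma (1 - α) := Real.Gamma_pos_of_pos (by linarith)
  have hp : ∀ j : ℕ, 0 ≤ α * (j : ℝ) := fun j => by positivity
  set k : ℕ → ℝ → ℝ := fun j s => (1 - s ^ (α * (j : ℝ))) * (1 - s) ^ (-α - 1) with hk
  -- termwise evaluation, stated for arbitrary `x` so as to apply to both `y` and `|y|`
  have hterm : ∀ (x : ℝ) (j : ℕ),
      x ^ j / Real.Gamma (α * j + 1) * ∫ s in Ioc (0 : ℝ) 1, k j s =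
      α⁻¹ * (Real.Gamma (1 - α) * (x ^ j / Real.Gamma (α * j + (1 - α))) -
        x ^ j / Real.Gamma (α * j + 1)) := by
    intro x j
    have h := kernel_integral hα1 (hp j)
    have hd := (mlf_denom_pos hα0 j).ne'
    have hI : ∫ s in Ioc (0 : ℝ) 1, k j s = α⁻¹ * (Real.Gamma (α * j + 1) * Real.Gamma (1 - α) /
        Real.Gamma (α * j + (1 - α)) - 1) := by
      rw [← h, inv_mul_cancel_left₀ hα0.ne']
    have hd2 : Real.Gamma (α * j + (1 - α)) ≠ 0 :=
      (Real.Gamma_pos_of_pos (by linarith [hp j])).ne'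
    rw [hI]
    field_simp
  have hsum : ∀ x : ℝ, HasSum
      (fun j : ℕ => x ^ j / Real.Gamma (α * j + 1) * ∫ s in Ioc (0 : ℝ) 1, k j s)
      (α⁻¹ * (Real.Gamma (1 - α) * (x * mlf α 1 x + 1 / Real.Gamma (1 - α)) - mlf α 1 x)) := by
    intro x
    simp_rw [hterm]
    exact (((hasSum_shifted hα0 x).mul_left _).sub (summable_mlf hα0 x).hasSum).mul_left _
  have hkint : ∀ j, Integrable (k j) (volume.restrict (Ioc 0 1)) := fun j =>
    kernel_integrable hα1 (hp j)
  have hnorm : ∀ j : ℕ, ∫ s in Ioc (0 : ℝ) 1, ‖y ^ j / Real.Gamma (α * j + 1) * k j s‖ =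
      |y| ^ j / Real.Gamma (α * j + 1) * ∫ s in Ioc (0 : ℝ) 1, k j s := by
    intro j
    rw [← integral_const_mul]
    refine setIntegral_congr_fun measurableSet_Ioc fun s hs => ?_
    have h0 : 0 ≤ k j s := kernel_nonneg (hp j) hs.1 hs.2
    simp only [norm_mul, norm_div, norm_pow, Real.norm_eq_abs, abs_of_nonneg h0,
      abs_of_pos (mlf_denom_pos hα0 j)]
  have hswap := hasSum_integral_of_summable_integral_norm
    (F := fun (j : ℕ) s => y ^ j / Real.Gamma (α * j + 1) * k j s)
    (fun j => (hkint j).const_mul _) (by simp_rw [hnorm]; exact (hsum |y|).summable)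
  simp_rw [integral_const_mul] at hswap
  have hval := hswap.unique (hsum y)
  have hfun : ∀ s ∈ Ioc (0 : ℝ) 1, ∑' j : ℕ, y ^ j / Real.Gamma (α * j + 1) * k j s =
      (mlf α 1 y - mlf α 1 (y * s ^ α)) * (1 - s) ^ (-α - 1) := by
    intro s hs
    refine HasSum.tsum_eq ?_
    refine (((summable_mlf hα0 y).hasSum.sub
      (summable_mlf hα0 (y * s ^ α)).hasSum).mul_right ((1 - s) ^ (-α - 1))).congr_fun fun j => ?_
    simp only [hk]
    rw [mul_pow, Real.rpow_mul hs.1.le, Real.rpow_natCast]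
    ring
  rw [← setIntegral_congr_fun measurableSet_Ioc hfun, hval]
  field_simp
  ring

lemma mlf_pos_of_nonneg {α x : ℝ} (hα0 : 0 < α) (hx : 0 ≤ x) : 0 < mlf α 1 x :=
  (summable_mlf hα0 x).tsum_pos
    (fun j => div_nonneg (by positivity) (mlf_denom_pos hα0 j).le) 0 (by simp)

lemma mlf_pos {α : ℝ} (hα0 : 0 < α) (hα1 : α < 1) (x : ℝ) : 0 < mlf α 1 x := by
  by_contra! hneg
  have hx : x ≤ 0 := by
    by_contra! h
    exact hneg.not_gt (mlf_pos_of_nonneg hα0 h.le)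
  obtain ⟨y, hy, hmin⟩ := isCompact_Icc.exists_isMinOn (nonempty_Icc.2 hx)
    (by simpa using continuousOn_mlf hα0 (-x))
  have hy0 : mlf α 1 y ≤ 0 := (hmin (left_mem_Icc.2 hx)).trans hneg
  have hint : ∫ s in Ioc (0 : ℝ) 1,
      (mlf α 1 y - mlf α 1 (y * s ^ α)) * (1 - s) ^ (-α - 1) ≤ 0 := by
    refine setIntegral_nonpos measurableSet_Ioc fun s hs => ?_
    have h0 : 0 ≤ s ^ α := Real.rpow_nonneg hs.1.le _
    have h1 : s ^ α ≤ 1 := Real.rpow_le_one hs.1.le hs.2 hα0.le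
    have hmem : y * s ^ α ∈ Icc x 0 :=
      ⟨by nlinarith [hy.1, hy.2], mul_nonpos_of_nonpos_of_nonneg hy.2 h0⟩
    exact mul_nonpos_of_nonpos_of_nonneg (sub_nonpos.2 (hmin hmem))
      (Real.rpow_nonneg (by linarith [hs.2]) _)
  have hG : 0 < Real.Gamma (1 - α) := Real.Gamma_pos_of_pos (by linarith)
  have h1 := marchaud_mlf hα0 hα1 y
  have h2 := mul_nonpos_of_nonneg_of_nonpos hα0.le hint
  have h3 := mul_nonneg hG.le (mul_nonneg_of_nonpos_of_nonpos hy.2 hy0)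
  linarith

/-- For `0 < α < 1`, `E_{α,1}(x) > 0` for every real `x`; in particular
`E_{α,1}(ρ t^α) ≠ 0` for every `ρ ∈ ℝ` and `t ≥ 0`, so `S_α(t) = E_{α,1}(ρ t^α)`
is invertible. -/
theorem mittagLeffler_pos {α : ℝ} (hα0 : 0 < α) (hα1 : α < 1) :
    (∀ x : ℝ, 0 < mlf α 1 x) ∧
      ∀ ρ t : ℝ, 0 ≤ t → mlf α 1 (ρ * t ^ α) ≠ 0 :=
  ⟨mlf_pos hα0 hα1, fun _ _ _ => (mlf_pos hα0 hα1 _).ne'⟩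
end

section
/- Let α > 0, ρ ∈ ℝ, and let λ > 0 be a real number with λ^α > |ρ|. Then the Laplace transform of t ↦ E_{α,1}(ρ t^α) exists and ∫_0^∞ e^{-λ t} E_{α,1}(ρ t^α) dt = λ^{α-1} / (λ^α − ρ). -/
open MeasureTheory Set

/-- Existence of the Laplace transform of a power follows from its nonzero value, the Bochner
integral of a non-integrable function being `0`. -/
lemma integrableOn_rpow_mul_exp {s lam : ℝ} (hs : 0 < s) (hlam : 0 < lam) :
    IntegrableOn (fun t : ℝ => t ^ (s - 1) * Real.exp (-(lam * t))) (Ioi 0) := by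
  refine not_imp_comm.1 integral_undef ?_
  rw [Real.integral_rpow_mul_exp_neg_mul_Ioi hs hlam]
  have := Real.Gamma_pos_of_pos hs
  positivity

/-- On `t > 0`, the `j`-th term of the transformed series in the form of a Gamma integrand. -/
lemma mlf_term_eq {α ρ lam t : ℝ} (ht : 0 < t) (j : ℕ) :
    Real.exp (-(lam * t)) * ((ρ * t ^ α) ^ j / Real.Gamma (α * j + 1)) =
      ρ ^ j / Real.Gamma (α * j + 1) *
        (t ^ ((α * j + 1) - 1) * Real.exp (-(lam * t))) := by
  rw [mul_pow, ← Real.rpow_mul_natCast ht.le, add_sub_cancel_right]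
  ring

lemma integrableOn_mlf_term {α lam : ℝ} (ρ : ℝ) (hα : 0 < α) (hlam : 0 < lam) (j : ℕ) :
    IntegrableOn (fun t : ℝ =>
      Real.exp (-(lam * t)) * ((ρ * t ^ α) ^ j / Real.Gamma (α * j + 1))) (Ioi 0) := by
  refine IntegrableOn.congr_fun ?_ (fun t ht => (mlf_term_eq ht j).symm) measurableSet_Ioi
  exact (integrableOn_rpow_mul_exp (by positivity) hlam).const_mul _

lemma integral_mlf_term {α lam : ℝ} (ρ : ℝ) (hα : 0 < α) (hlam : 0 < lam) (j : ℕ) :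
    ∫ t in Ioi (0 : ℝ),
      Real.exp (-(lam * t)) * ((ρ * t ^ α) ^ j / Real.Gamma (α * j + 1)) =
        lam⁻¹ * (ρ / lam ^ α) ^ j := by
  have hs : 0 < α * j + 1 := by positivity
  have hG := (Real.Gamma_pos_of_pos hs).ne'
  rw [setIntegral_congr_fun measurableSet_Ioi (fun t ht => mlf_term_eq ht j),
    integral_const_mul, Real.integral_rpow_mul_exp_neg_mul_Ioi hs hlam, one_div,
    Real.inv_rpow hlam.le, Real.rpow_add hlam, Real.rpow_one, Real.rpow_mul_natCast hlam.le,
    div_pow]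
  have : lam ^ α ≠ 0 := (Real.rpow_pos_of_pos hlam α).ne'
  field_simp

/-- For `α > 0`, `ρ ∈ ℝ` and real `λ > 0` with `λ^α > |ρ|`, the Laplace
transform of `t ↦ E_{α,1}(ρ t^α)` exists and equals `λ^{α-1} / (λ^α − ρ)`. -/
theorem laplace_mittagLeffler {α ρ lam : ℝ} (hα : 0 < α) (hlam : 0 < lam)
    (h : |ρ| < lam ^ α) :
    MeasureTheory.IntegrableOn
        (fun t : ℝ => Real.exp (-(lam * t)) * mlf α 1 (ρ * t ^ α)) (Set.Ioi 0) ∧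
      ∫ t in Set.Ioi (0 : ℝ), Real.exp (-(lam * t)) * mlf α 1 (ρ * t ^ α) =
        lam ^ (α - 1) / (lam ^ α - ρ) := by
  have hL : 0 < lam ^ α := Real.rpow_pos_of_pos hlam α
  have hsub : 0 < lam ^ α - ρ := sub_pos.2 ((le_abs_self ρ).trans_lt h)
  have key : ∫ t in Ioi (0 : ℝ), Real.exp (-(lam * t)) * mlf α 1 (ρ * t ^ α) =
      lam ^ (α - 1) / (lam ^ α - ρ) := by
    have hnorm (j : ℕ) : ∫ t in Ioi (0 : ℝ),
        ‖Real.exp (-(lam * t)) * ((ρ * t ^ α) ^ j / Real.Gamma (α * j + 1))‖ =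
          lam⁻¹ * (|ρ| / lam ^ α) ^ j := by
      rw [← integral_mlf_term |ρ| hα hlam j]
      refine setIntegral_congr_fun measurableSet_Ioi fun t ht => ?_
      have hG : 0 < Real.Gamma (α * j + 1) := Real.Gamma_pos_of_pos (by positivity)
      have htα : 0 < t ^ α := Real.rpow_pos_of_pos ht α
      simp only [Real.norm_eq_abs, abs_mul, abs_div, abs_pow, Real.abs_exp, abs_of_pos hG,
        abs_of_pos htα]
    have hsum := hasSum_integral_of_summable_integral_norm
      (fun j => integrableOn_mlf_term ρ hα hlam j) (by
        simp only [hnorm]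
        exact (summable_geometric_of_lt_one (by positivity) ((div_lt_one hL).2 h)).mul_left _)
    -- Over a field, `tsum_mul_left` needs no summability, so pointwise convergence is not required.
    simp only [integral_mlf_term ρ hα hlam, tsum_mul_left] at hsum
    have hgeom := (hasSum_geometric_of_abs_lt_one (r := ρ / lam ^ α) (by
      rwa [abs_div, abs_of_pos hL, div_lt_one hL])).mul_left lam⁻¹
    refine (hsum.unique hgeom).trans ?_
    rw [Real.rpow_sub_one hlam.ne', one_sub_div hL.ne', inv_div]
    field_simp
  refine ⟨not_imp_comm.1 integral_undef ?_, key⟩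
  rw [key]
  positivity
end

section
/- Let α > 0, ρ ∈ ℝ, and let λ > 0 be a real number with λ^α > |ρ|. Then the Laplace transform of t ↦ t^{α-1} E_{α,α}(ρ t^α) exists and ∫_0^∞ e^{-λ t} t^{α-1} E_{α,α}(ρ t^α) dt = 1 / (λ^α − ρ). -/
open MeasureTheory Set in
/-- The Laplace transform of one term of the series, with the Gamma factors cancelled. -/
lemma integral_mittagLeffler_term {α lam : ℝ} (hα : 0 < α) (hlam : 0 < lam) (c : ℝ) (j : ℕ) :
    ∫ t in Ioi (0 : ℝ), c ^ j / Real.Gamma (α * j + α) *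
        (t ^ (α * j + α - 1) * Real.exp (-(lam * t))) =
      (lam ^ α)⁻¹ * (c / lam ^ α) ^ j := by
  have ha : 0 < α * j + α := by positivity
  have hΓ := (Real.Gamma_pos_of_pos ha).ne'
  have hl : lam ^ α ≠ 0 := (Real.rpow_pos_of_pos hlam α).ne'
  rw [integral_const_mul, Real.integral_rpow_mul_exp_neg_mul_Ioi ha hlam, one_div,
    Real.inv_rpow hlam.le, Real.rpow_add hlam, Real.rpow_mul hlam.le, Real.rpow_natCast, div_pow]
  field_simp

open MeasureTheory Set in
/-- For `α > 0`, `ρ ∈ ℝ` and real `λ > 0` with `λ^α > |ρ|`, the Laplace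
transform of `t ↦ t^{α-1} E_{α,α}(ρ t^α)` exists and equals `1 / (λ^α − ρ)`. -/
theorem laplace_mittagLeffler' {α ρ lam : ℝ} (hα : 0 < α) (hlam : 0 < lam)
    (h : |ρ| < lam ^ α) :
    MeasureTheory.IntegrableOn
        (fun t : ℝ => Real.exp (-(lam * t)) * (t ^ (α - 1) * mlf α α (ρ * t ^ α)))
        (Set.Ioi 0) ∧
      ∫ t in Set.Ioi (0 : ℝ),
          Real.exp (-(lam * t)) * (t ^ (α - 1) * mlf α α (ρ * t ^ α)) =
        1 / (lam ^ α - ρ) := by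
  have hl : 0 < lam ^ α := Real.rpow_pos_of_pos hlam α
  have hpos : 0 < lam ^ α - ρ := sub_pos.2 ((le_abs_self ρ).trans_lt h)
  suffices hI : ∫ t in Set.Ioi (0 : ℝ),
      Real.exp (-(lam * t)) * (t ^ (α - 1) * mlf α α (ρ * t ^ α)) = 1 / (lam ^ α - ρ) from
    ⟨.of_integral_ne_zero (by rw [hI]; positivity), hI⟩
  let F : ℕ → ℝ → ℝ := fun j t => ρ ^ j / Real.Gamma (α * j + α) *
    (t ^ (α * j + α - 1) * Real.exp (-(lam * t)))
  have hseries : ∀ t ∈ Ioi (0 : ℝ),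
      Real.exp (-(lam * t)) * (t ^ (α - 1) * mlf α α (ρ * t ^ α)) = ∑' j, F j t := by
    intro t (ht : 0 < t)
    -- `tsum_mul_left` holds in a division ring without any summability assumption
    rw [mlf, ← tsum_mul_left, ← tsum_mul_left]
    refine tsum_congr fun j => ?_
    simp only [F]
    rw [add_sub_assoc, Real.rpow_add ht, Real.rpow_mul ht.le, Real.rpow_natCast, mul_pow]
    ring
  have hint : ∀ j, Integrable (F j) (volume.restrict (Ioi 0)) := by
    intro j
    have ha : 0 < α * j + α := by positivity
    have hΓ := Real.Gamma_pos_of_pos ha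
    refine Integrable.const_mul (.of_integral_ne_zero ?_) _
    rw [Real.integral_rpow_mul_exp_neg_mul_Ioi ha hlam]
    positivity
  have hnorm : ∀ j, ∫ t in Ioi (0 : ℝ), ‖F j t‖ = (lam ^ α)⁻¹ * (|ρ| / lam ^ α) ^ j := by
    intro j
    rw [← integral_mittagLeffler_term hα hlam]
    refine setIntegral_congr_fun measurableSet_Ioi fun t (ht : 0 < t) => ?_
    have hΓ := Real.Gamma_pos_of_pos (show 0 < α * j + α by positivity)
    simp only [F, Real.norm_eq_abs, abs_mul, abs_div, abs_pow, abs_of_pos hΓ,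
      abs_of_pos (Real.rpow_pos_of_pos ht _), Real.abs_exp]
  have hsum : Summable fun j => ∫ t in Ioi (0 : ℝ), ‖F j t‖ := by
    simp_rw [hnorm]
    exact (summable_geometric_of_lt_one (by positivity) ((div_lt_one hl).2 h)).mul_left _
  have hgeo : |ρ / lam ^ α| < 1 := by
    rwa [abs_div, abs_of_pos hl, div_lt_one hl]
  rw [setIntegral_congr_fun measurableSet_Ioi hseries,
    ← integral_tsum_of_summable_integral_norm hint hsum,
    tsum_congr fun j => integral_mittagLeffler_term hα hlam ρ j, tsum_mul_left,
    tsum_geometric_of_abs_lt_one hgeo, ← mul_inv, one_div, mul_sub, mul_one,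
    mul_div_cancel₀ _ hl.ne']
end

section
/- Let 0 < α < 1 and let f : [0,∞) → ℝ be continuously differentiable such that there exist constants M > 0 and σ ≥ 0 with |f(t)| ≤ M e^{σ t} and |f'(t)| ≤ M e^{σ t} for all t ≥ 0. Then for every real λ > σ, ∫_0^∞ e^{-λ t} ({}_0D_t^α f)(t) dt = λ^α ∫_0^∞ e^{-λ t} f(t) dt − λ^{α-1} f(0). -/
/-!
The Caputo derivative is `1 / Γ(1 - α)` times the convolution on `[0, t]` of `s ↦ s ^ (-α)` with
`f'`. Because `exp (-(lam * t)) = exp (-(lam * s)) * exp (-(lam * (t - s)))`, the weight passes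
inside the convolution, and `MeasureTheory.integral_posConvolution` (Fubini) factors the Laplace
transform into the product of the transforms of `s ^ (-α)` and of `f'`. The first is
`lam ^ (α - 1) * Γ(1 - α)`, a Gamma integral; the second is `lam * L f - f 0`, by integration by
parts (`laplace_deriv_of_exp_order`). Exponential order `σ < lam` makes every integral absolutely
convergent (`integrableOn_laplace_of_exp_order`) and kills the boundary term at infinity.
-/

open MeasureTheory Set Filter Topology

lemma norm_exp_mul_le_of_exp_order {g : ℝ → ℝ} {M σ : ℝ}
    (hbg : ∀ t ≥ (0 : ℝ), |g t| ≤ M * Real.exp (σ * t)) (lam : ℝ) {t : ℝ} (ht : 0 ≤ t) :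
    ‖Real.exp (-(lam * t)) * g t‖ ≤ M * Real.exp ((σ - lam) * t) := by
  rw [Real.norm_eq_abs, abs_mul, Real.abs_exp]
  calc Real.exp (-(lam * t)) * |g t|
      ≤ Real.exp (-(lam * t)) * (M * Real.exp (σ * t)) := by
        gcongr
        exact hbg t ht
    _ = M * Real.exp ((σ - lam) * t) := by
        rw [mul_left_comm, ← Real.exp_add]
        congr 2
        ring

lemma integrableOn_laplace_of_exp_order {g : ℝ → ℝ} (hg : ContinuousOn g (Ici 0)) {M σ lam : ℝ}
    (hbg : ∀ t ≥ (0 : ℝ), |g t| ≤ M * Real.exp (σ * t)) (hlam : σ < lam) :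
    IntegrableOn (fun t => Real.exp (-(lam * t)) * g t) (Ioi 0) := by
  have hb : IntegrableOn (fun t : ℝ => M * Real.exp ((σ - lam) * t)) (Ioi 0) :=
    (integrableOn_exp_mul_Ioi (sub_neg.mpr hlam) 0).const_mul M
  refine Integrable.mono' hb ?_ ?_
  · refine ContinuousOn.aestronglyMeasurable ?_ measurableSet_Ioi
    exact (by fun_prop : Continuous fun t : ℝ => Real.exp (-(lam * t))).continuousOn.mul
      (hg.mono Ioi_subset_Ici_self)
  · refine (ae_restrict_mem measurableSet_Ioi).mono fun t ht => ?_
    exact norm_exp_mul_le_of_exp_order hbg lam (le_of_lt ht)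

/-- The boundary term at infinity in the integration by parts vanishes. -/
lemma tendsto_exp_mul_of_exp_order {g : ℝ → ℝ} {M σ lam : ℝ}
    (hbg : ∀ t ≥ (0 : ℝ), |g t| ≤ M * Real.exp (σ * t)) (hlam : σ < lam) :
    Tendsto (fun t => Real.exp (-(lam * t)) * g t) atTop (𝓝 0) := by
  have hlim : Tendsto (fun t : ℝ => M * Real.exp ((σ - lam) * t)) atTop (𝓝 0) := by
    have h := (Real.tendsto_exp_atBot.comp
      (tendsto_id.const_mul_atTop_of_neg (sub_neg.mpr hlam))).const_mul M
    simpa using h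
  refine squeeze_zero_norm' ?_ hlim
  filter_upwards [eventually_ge_atTop (0 : ℝ)] with t ht
  exact norm_exp_mul_le_of_exp_order hbg lam ht

lemma laplace_deriv_of_exp_order {f f' : ℝ → ℝ} {M σ lam : ℝ}
    (hder : ∀ t ∈ Ici (0 : ℝ), HasDerivAt f (f' t) t) (hcont : ContinuousOn f' (Ici 0))
    (hbf : ∀ t ≥ (0 : ℝ), |f t| ≤ M * Real.exp (σ * t))
    (hbf' : ∀ t ≥ (0 : ℝ), |f' t| ≤ M * Real.exp (σ * t)) (hlam : σ < lam) :
    ∫ t in Ioi (0 : ℝ), Real.exp (-(lam * t)) * f' t =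
      lam * (∫ t in Ioi (0 : ℝ), Real.exp (-(lam * t)) * f t) - f 0 := by
  have hf : ContinuousOn f (Ici 0) := fun t ht => (hder t ht).continuousAt.continuousWithinAt
  have i₁ := integrableOn_laplace_of_exp_order hf hbf hlam
  have i₂ := integrableOn_laplace_of_exp_order hcont hbf' hlam
  have hd : ∀ t ∈ Ici (0 : ℝ), HasDerivAt (fun t => Real.exp (-(lam * t)) * f t)
      (Real.exp (-(lam * t)) * f' t - lam * (Real.exp (-(lam * t)) * f t)) t := by
    intro t ht
    have he : HasDerivAt (fun t : ℝ => Real.exp (-(lam * t)))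
        (Real.exp (-(lam * t)) * (-(lam * 1))) t :=
      ((hasDerivAt_id t).const_mul lam).neg.exp
    exact (he.mul (hder t ht)).congr_deriv (by ring)
  have h := integral_Ioi_of_hasDerivAt_of_tendsto' hd (i₂.sub (i₁.const_mul lam))
    (tendsto_exp_mul_of_exp_order hbf hlam)
  rw [integral_sub i₂ (i₁.const_mul lam), integral_const_mul] at h
  simp only [mul_zero, neg_zero, Real.exp_zero, one_mul] at h
  linarith

/-- For `0 < α < 1` and a continuously differentiable `f` on `[0,∞)` of
exponential order (together with its derivative), for every real `λ > σ` the Laplace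
transform of the Caputo derivative
`({}_0D_t^α f)(t) = (1/Γ(1−α)) ∫_0^t (t−s)^{−α} f'(s) ds` satisfies
`∫_0^∞ e^{-λ t} ({}_0D_t^α f)(t) dt = λ^α ∫_0^∞ e^{-λ t} f(t) dt − λ^{α-1} f(0)`. -/
theorem laplace_caputo {α : ℝ} (hα0 : 0 < α) (hα1 : α < 1)
    (f f' : ℝ → ℝ)
    (hder : ∀ t ∈ Set.Ici (0 : ℝ), HasDerivAt f (f' t) t)
    (hcont : ContinuousOn f' (Set.Ici 0))
    (M σ : ℝ) (hM : 0 < M) (hσ : 0 ≤ σ)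
    (hbf : ∀ t ≥ (0 : ℝ), |f t| ≤ M * Real.exp (σ * t))
    (hbf' : ∀ t ≥ (0 : ℝ), |f' t| ≤ M * Real.exp (σ * t))
    (lam : ℝ) (hlam : σ < lam) :
    ∫ t in Set.Ioi (0 : ℝ), Real.exp (-(lam * t)) *
        ((1 / Real.Gamma (1 - α)) * ∫ s in (0 : ℝ)..t, (t - s) ^ (-α) * f' s) =
      lam ^ α * (∫ t in Set.Ioi (0 : ℝ), Real.exp (-(lam * t)) * f t) -
        lam ^ (α - 1) * f 0 := by
  have hl : 0 < lam := hσ.trans_lt hlam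
  have hΓ : 0 < Real.Gamma (1 - α) := Real.Gamma_pos_of_pos (by linarith)
  have hker : ∫ t in Ioi (0 : ℝ), t ^ (-α) * Real.exp (-(lam * t)) =
      lam ^ (α - 1) * Real.Gamma (1 - α) := by
    have h := Real.integral_rpow_mul_exp_neg_mul_Ioi (a := 1 - α) (by linarith) hl
    rw [show 1 - α - 1 = -α by ring] at h
    rw [h, one_div, Real.inv_rpow hl.le, ← Real.rpow_neg hl.le, neg_sub]
  -- The Bochner integral of a non-integrable function is `0`, and this one is positive.
  have hki : IntegrableOn (fun t : ℝ => t ^ (-α) * Real.exp (-(lam * t))) (Ioi 0) := by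
    by_contra hn
    have hpos : 0 < lam ^ (α - 1) * Real.Gamma (1 - α) := by positivity
    rw [← hker, integral_undef hn] at hpos
    exact hpos.false
  have hconv := integral_posConvolution (integrableOn_laplace_of_exp_order hcont hbf' hlam) hki
    (ContinuousLinearMap.mul ℝ ℝ)
  simp only [ContinuousLinearMap.mul_apply'] at hconv
  rw [hker, laplace_deriv_of_exp_order hder hcont hbf hbf' hlam] at hconv
  have hweight : ∀ t : ℝ, Real.exp (-(lam * t)) *
      ((1 / Real.Gamma (1 - α)) * ∫ s in (0 : ℝ)..t, (t - s) ^ (-α) * f' s) =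
      (1 / Real.Gamma (1 - α)) * ∫ s in (0 : ℝ)..t, Real.exp (-(lam * s)) * f' s *
        ((t - s) ^ (-α) * Real.exp (-(lam * (t - s)))) := by
    intro t
    rw [mul_left_comm, ← intervalIntegral.integral_const_mul]
    congr 2
    funext s
    rw [show -(lam * t) = -(lam * s) + -(lam * (t - s)) by ring, Real.exp_add]
    ring
  simp_rw [hweight]
  rw [integral_const_mul, hconv, show lam ^ α = lam ^ (α - 1) * lam by
    rw [← Real.rpow_add_one hl.ne', sub_add_cancel]]
  field_simp
end

section
/- Let 0 < α < 1 and ρ ∈ ℝ. Then for every t > 0, the Caputo fractional derivative with base point 0 of the function u(t) = E_{α,1}(ρ t^α) satisfies ({}_0D_t^α u)(t) = ρ E_{α,1}(ρ t^α), i.e. (1/Γ(1−α)) ∫_0^t (t−s)^{−α} u'(s) ds = ρ E_{α,1}(ρ t^α). -/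
open Real Set MeasureTheory

/-- Lower bound obtained by restricting Euler's integral to `(M, M + 1]`. As `M` is arbitrary, `Γ`
grows faster than any exponential. -/
lemma Gamma_ge {M y : ℝ} (hM : 0 < M) (hy : 1 ≤ y) :
    exp (-(M + 1)) * M ^ (y - 1) ≤ Gamma y := by
  have hy0 : 0 < y := by linarith
  rw [Gamma_eq_integral hy0]
  have hint := GammaIntegral_convergent hy0
  have hsub : Ioc M (M + 1) ⊆ Ioi (0 : ℝ) := fun s hs => hM.trans hs.1
  calc exp (-(M + 1)) * M ^ (y - 1)
      = ∫ _s in Ioc M (M + 1), exp (-(M + 1)) * M ^ (y - 1) := by simp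
    _ ≤ ∫ s in Ioc M (M + 1), exp (-s) * s ^ (y - 1) := by
        refine setIntegral_mono_on (integrableOn_const (by simp)) (hint.mono_set hsub) measurableSet_Ioc ?_
        intro s hs
        have h1 : exp (-(M + 1)) ≤ exp (-s) := exp_le_exp.2 (by linarith [hs.2])
        have h2 : M ^ (y - 1) ≤ s ^ (y - 1) := rpow_le_rpow hM.le hs.1.le (by linarith)
        gcongr
    _ ≤ ∫ s in Ioi 0, exp (-s) * s ^ (y - 1) := by
        refine setIntegral_mono_set hint ?_ hsub.eventuallyLE
        filter_upwards [ae_restrict_mem measurableSet_Ioi] with s hs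
        have : (0:ℝ) < s := hs
        simp only [Pi.zero_apply]; positivity

/-- Thanks to the factor `j + 1`, for `R ≥ 1` this series dominates the termwise derivative of the
Mittag-Leffler series on `|x| ≤ R`. -/
lemma summable_mul_pow_div_Gamma {α : ℝ} (hα : 0 < α) (R : ℝ) :
    Summable fun j : ℕ => (j + 1) * R ^ j / Gamma (α * j + 1) := by
  -- With `M ^ α = 2 (|R| + 1)`, the bound `Gamma_ge` gives domination by
  -- `(j + 1) / 2 ^ j`, up to a constant.
  set M : ℝ := (2 * (|R| + 1)) ^ (1 / α) with hMdef
  have hM : 0 < M := by positivity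
  have hMα : M ^ α = 2 * (|R| + 1) := by
    rw [hMdef, ← rpow_mul (by positivity)]; field_simp; simp
  have hgeo : Summable fun j : ℕ => exp (M + 1) * ((j + 1) * (1 / 2 : ℝ) ^ j) := by
    have h1 := summable_pow_mul_geometric_of_norm_lt_one 1 (r := (1 / 2 : ℝ)) (by norm_num)
    have h0 := summable_pow_mul_geometric_of_norm_lt_one 0 (r := (1 / 2 : ℝ)) (by norm_num)
    refine ((h1.add h0).mul_left (exp (M + 1))).congr fun j => ?_
    ring
  refine Summable.of_norm_bounded hgeo fun j => ?_
  have hG := Gamma_ge (y := α * j + 1) hM (by nlinarith [mul_nonneg hα.le (Nat.cast_nonneg (α := ℝ) j)])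
  rw [add_sub_cancel_right, rpow_mul hM.le, hMα, rpow_natCast] at hG
  have hG0 : 0 < exp (-(M + 1)) * (2 * (|R| + 1)) ^ j := by positivity
  have hj : (0:ℝ) ≤ j + 1 := by positivity
  rw [norm_eq_abs, abs_div, abs_mul, abs_pow, abs_of_nonneg hj, abs_of_pos (hG0.trans_le hG)]
  rw [div_le_iff₀ (hG0.trans_le hG)]
  calc ((j:ℝ) + 1) * |R| ^ j ≤ (j + 1) * (|R| + 1) ^ j := by gcongr; linarith
    _ = exp (M + 1) * ((j + 1) * (1 / 2 : ℝ) ^ j) * (exp (-(M + 1)) * (2 * (|R| + 1)) ^ j) := by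
        rw [exp_neg, mul_pow, one_div, inv_pow]; field_simp
    _ ≤ _ := by gcongr

lemma abs_deriv_term_le {α : ℝ} (hα : 0 < α) {x R : ℝ} (hR : 1 ≤ R) (hx : |x| ≤ R) (j : ℕ) :
    |j * x ^ (j - 1) / Gamma (α * j + 1)| ≤ (j + 1) * R ^ j / Gamma (α * j + 1) := by
  have hG : 0 < Gamma (α * j + 1) := Gamma_pos_of_pos (by positivity)
  rw [abs_div, abs_mul, abs_pow, abs_of_pos hG, Nat.abs_cast]
  gcongr
  · linarith
  · calc |x| ^ (j - 1) ≤ R ^ (j - 1) := by gcongr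
      _ ≤ R ^ j := pow_le_pow_right₀ hR (by omega)

lemma hasDerivAt_mlf_one {α : ℝ} (hα : 0 < α) (x : ℝ) :
    HasDerivAt (mlf α 1) (∑' j : ℕ, j * x ^ (j - 1) / Gamma (α * j + 1)) x := by
  set R : ℝ := |x| + 1
  have hR : 1 ≤ R := by simp [R]
  refine hasDerivAt_tsum_of_isPreconnected (t := Metric.ball (0 : ℝ) R) (y₀ := 0)
    (g := fun (j : ℕ) (y : ℝ) => y ^ j / Gamma (α * j + 1))
    (g' := fun (j : ℕ) (y : ℝ) => j * y ^ (j - 1) / Gamma (α * j + 1))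
    (summable_mul_pow_div_Gamma hα R) Metric.isOpen_ball
    (convex_ball 0 R).isPreconnected (fun j y _ => ?_) (fun j y hy => ?_) ?_ ?_ ?_
  · exact (hasDerivAt_pow j y).div_const _
  · exact abs_deriv_term_le hα hR (by simpa using (Metric.mem_ball.1 hy).le) j
  · simp; linarith
  · refine summable_of_ne_finset_zero (s := {0}) fun j hj => ?_
    simp at hj; simp [hj]
  · simp [R]

/-- Euler's beta integral over `[0, t]`, in real form. -/
lemma integral_rpow_mul_sub_rpow {u v t : ℝ} (hu : 0 < u) (hv : 0 < v) (ht : 0 < t) :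
    ∫ s in (0 : ℝ)..t, s ^ (u - 1) * (t - s) ^ (v - 1) =
      t ^ (u + v - 1) * (Gamma u * Gamma v / Gamma (u + v)) := by
  have h := Complex.betaIntegral_scaled u v ht
  rw [Complex.betaIntegral_eq_Gamma_mul_div _ _ (by simpa) (by simpa)] at h
  rw [← Complex.ofReal_inj, ← intervalIntegral.integral_ofReal]
  push_cast
  rw [Complex.ofReal_cpow ht.le, ← Complex.Gamma_ofReal, ← Complex.Gamma_ofReal, ← Complex.Gamma_ofReal]
  push_cast
  rw [← h]
  refine intervalIntegral.integral_congr fun s hs => ?_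
  rw [uIcc_of_le ht.le] at hs
  rw [Complex.ofReal_cpow hs.1, Complex.ofReal_cpow (sub_nonneg.2 hs.2)]
  push_cast; rfl

/-- In the termwise derivative the constant term drops out, so the series is reindexed by
`j ↦ j + 1`; its coefficients simplify through `αk / Γ(αk + 1) = 1 / Γ(αk)`. -/
lemma deriv_mlf_rpow {α : ℝ} (hα : 0 < α) (ρ : ℝ) {s : ℝ} (hs : 0 < s) :
    HasSum (fun j : ℕ => ρ ^ (j + 1) / Gamma (α * (j + 1)) * s ^ (α * (j + 1) - 1))
      (deriv (fun r : ℝ => mlf α 1 (ρ * r ^ α)) s) := by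
  have hd := (hasDerivAt_mlf_one hα (ρ * s ^ α)).comp s
    ((hasDerivAt_rpow_const (p := α) (Or.inl hs.ne')).const_mul ρ)
  have hd' : deriv (fun r : ℝ => mlf α 1 (ρ * r ^ α)) s = _ := hd.deriv
  have hsum : Summable fun j : ℕ =>
      (j : ℝ) * (ρ * s ^ α) ^ (j - 1) / Gamma (α * j + 1) := by
    exact Summable.of_norm_bounded (summable_mul_pow_div_Gamma hα (|ρ * s ^ α| + 1))
      (abs_deriv_term_le hα (le_add_of_nonneg_left (abs_nonneg _))
        (le_add_of_nonneg_right zero_le_one))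
  have hH := ((hasSum_nat_add_iff' 1).2 hsum.hasSum).mul_right (ρ * (α * s ^ (α - 1)))
  simp only [Finset.range_one, Finset.sum_singleton, Nat.cast_zero, zero_mul, zero_div,
    sub_zero] at hH
  rw [hd']
  refine (congrArg (HasSum · _) (funext fun j => ?_)).mpr hH
  have hz : 0 < α * ((j : ℝ) + 1) := by positivity
  have hG := Gamma_pos_of_pos hz
  have hp : s ^ (α * ((j : ℝ) + 1) - 1) = (s ^ α) ^ j * s ^ (α - 1) := by
    rw [← rpow_natCast, ← rpow_mul hs.le, ← rpow_add hs]; ring_nf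
  push_cast
  rw [Gamma_add_one hz.ne', hp, mul_pow, pow_succ]
  field_simp

/-- For `0 < α < 1`, `ρ ∈ ℝ` and `t > 0`, the Caputo derivative (base
point 0) of `u(t) = E_{α,1}(ρ t^α)` satisfies `({}_0D_t^α u)(t) = ρ E_{α,1}(ρ t^α)`. -/
theorem caputo_mittagLeffler {α ρ : ℝ} (hα0 : 0 < α) (hα1 : α < 1) {t : ℝ}
    (ht : 0 < t) :
    (1 / Real.Gamma (1 - α)) *
        ∫ s in (0 : ℝ)..t, (t - s) ^ (-α) *
          deriv (fun r : ℝ => mlf α 1 (ρ * r ^ α)) s =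
      ρ * mlf α 1 (ρ * t ^ α) := by
  have hΓ : 0 < Gamma (1 - α) := Gamma_pos_of_pos (by linarith)
  let K : ℕ → ℝ → ℝ := fun j s => s ^ (α * ((j : ℝ) + 1) - 1) * (t - s) ^ (1 - α - 1)
  let c : ℕ → ℝ := fun j => ρ ^ (j + 1) / Gamma (α * ((j : ℝ) + 1))
  have hGpos : ∀ j : ℕ, 0 < Gamma (α * ((j : ℝ) + 1)) := fun j => Gamma_pos_of_pos (by positivity)
  have hG1pos : ∀ j : ℕ, 0 < Gamma (α * (j : ℝ) + 1) := fun j => Gamma_pos_of_pos (by positivity)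
  have hK : ∀ j, ∫ s in (0 : ℝ)..t, K j s =
      (t ^ α) ^ j * (Gamma (α * ((j : ℝ) + 1)) * Gamma (1 - α) / Gamma (α * j + 1)) := fun j => by
    have h := integral_rpow_mul_sub_rpow (u := α * ((j : ℝ) + 1)) (v := 1 - α) (by positivity)
      (by linarith) ht
    rw [show α * ((j : ℝ) + 1) + (1 - α) = α * j + 1 by ring, add_sub_cancel_right,
      rpow_mul ht.le, rpow_natCast] at h
    exact h
  -- A function whose integral is nonzero is integrable.
  have hKint : ∀ j, IntervalIntegrable (K j) volume 0 t := fun j => by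
    refine intervalIntegral.intervalIntegrable_of_integral_ne_zero ?_
    rw [hK]
    have := hGpos j
    have := hG1pos j
    positivity
  have hKnn : ∀ j, ∀ s ∈ Ioc 0 t, 0 ≤ K j s := fun j s hs =>
    mul_nonneg (rpow_nonneg hs.1.le _) (rpow_nonneg (sub_nonneg.2 hs.2) _)
  have hswap := hasSum_integral_of_summable_integral_norm
    (μ := volume.restrict (Ioc 0 t)) (F := fun j s => c j * K j s)
    (fun j => ((hKint j).1).const_mul (c j)) ?_
  · have hL : ∫ s in (0 : ℝ)..t, (t - s) ^ (-α) * deriv (fun r : ℝ => mlf α 1 (ρ * r ^ α)) s =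
        ∫ s in Ioc 0 t, ∑' j, c j * K j s := by
      rw [intervalIntegral.integral_of_le ht.le]
      refine setIntegral_congr_fun measurableSet_Ioc fun s hs => ?_
      have h := (deriv_mlf_rpow hα0 ρ hs.1).mul_left ((t - s) ^ (-α))
      refine h.tsum_eq.symm.trans (tsum_congr fun j => ?_)
      simp only [c, K, show 1 - α - 1 = -α by ring]
      ring
    rw [hL, ← hswap.tsum_eq, mlf, ← tsum_mul_left, ← tsum_mul_left]
    refine tsum_congr fun j => ?_
    rw [integral_const_mul, ← intervalIntegral.integral_of_le ht.le, hK]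
    have := hGpos j
    have := hG1pos j
    simp only [c]
    rw [mul_pow, pow_succ]
    field_simp
  · have hsum := (summable_mul_pow_div_Gamma hα0 (|ρ| * t ^ α)).mul_left (|ρ| * Gamma (1 - α))
    refine Summable.of_nonneg_of_le (fun j => integral_nonneg fun s => norm_nonneg _)
      (fun j => ?_) hsum
    have hn : ∫ s in Ioc 0 t, ‖c j * K j s‖ = |c j| * ∫ s in (0 : ℝ)..t, K j s := by
      rw [intervalIntegral.integral_of_le ht.le, ← integral_const_mul]
      refine setIntegral_congr_fun measurableSet_Ioc fun s hs => ?_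
      simp only [norm_mul, norm_eq_abs, abs_of_nonneg (hKnn j s hs)]
    have h1 := hGpos j
    have h2 := hG1pos j
    rw [hn, hK]
    simp only [c, abs_div, abs_pow, abs_of_pos h1]
    calc |ρ| ^ (j + 1) / Gamma (α * ((j : ℝ) + 1)) * ((t ^ α) ^ j *
          (Gamma (α * ((j : ℝ) + 1)) * Gamma (1 - α) / Gamma (α * j + 1)))
        = |ρ| * Gamma (1 - α) * (1 * (|ρ| * t ^ α) ^ j / Gamma (α * j + 1)) := by
          rw [mul_pow, pow_succ]; field_simp
      _ ≤ _ := by gcongr; simp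
end

section
/- Let 0 < α < 1, ρ ∈ ℝ, 0 ≤ t_k < T, and let f : [t_k, T] → ℝ be continuously differentiable. Define Ψ(t) = ∫_{t_k}^t (t−θ)^{α−1} E_{α,α}(ρ (t−θ)^α) f(θ) dθ for t ∈ [t_k, T]. Then for every t ∈ (t_k, T], the Caputo fractional derivative with base point t_k satisfies ({}_{t_k}D_t^α Ψ)(t) = ρ Ψ(t) + f(t). -/
namespace CaputoML

open MeasureTheory Set Filter Topology

/-! ### The Mittag-Leffler kernel -/

lemma integral_beta {a b x : ℝ} (ha : 0 < a) (hb : 0 < b) (hx : 0 < x) :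
    ∫ y in (0 : ℝ)..x, y ^ (a - 1) * (x - y) ^ (b - 1) =
      x ^ (a + b - 1) * (Real.Gamma a * Real.Gamma b / Real.Gamma (a + b)) := by
  have h := Complex.betaIntegral_scaled a b hx
  have hB : Complex.betaIntegral a b =
      ((Real.Gamma a * Real.Gamma b / Real.Gamma (a + b) : ℝ) : ℂ) := by
    rw [Complex.betaIntegral_eq_Gamma_mul_div _ _ (by simpa) (by simpa)]
    push_cast [Complex.Gamma_ofReal, ← Complex.ofReal_add]
    simp [← Complex.Gamma_ofReal]
  have hL : ∫ y in (0 : ℝ)..x, (y : ℂ) ^ ((a : ℂ) - 1) * ((x : ℂ) - y) ^ ((b : ℂ) - 1) =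
      ((∫ y in (0 : ℝ)..x, y ^ (a - 1) * (x - y) ^ (b - 1) : ℝ) : ℂ) := by
    rw [← intervalIntegral.integral_ofReal]
    refine intervalIntegral.integral_congr fun y hy => ?_
    rw [uIcc_of_le hx.le] at hy
    simp only [Complex.ofReal_mul]
    rw [Complex.ofReal_cpow hy.1, Complex.ofReal_cpow (sub_nonneg.2 hy.2)]
    push_cast
    rfl
  rw [hL, hB] at h
  have hp : ((x : ℂ) ^ ((a : ℂ) + b - 1)) = ((x ^ (a + b - 1) : ℝ) : ℂ) := by
    rw [Complex.ofReal_cpow hx.le]; push_cast; rfl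
  rw [hp] at h
  exact_mod_cast h

lemma intervalIntegrable_beta {a b x : ℝ} (ha : 0 < a) (hb : 0 < b) (hx : 0 < x) :
    IntervalIntegrable (fun y => y ^ (a - 1) * (x - y) ^ (b - 1)) volume 0 x := by
  -- A non-integrable function would have integral `0`.
  apply intervalIntegral.intervalIntegrable_of_integral_ne_zero
  rw [integral_beta ha hb hx]
  have := Real.Gamma_pos_of_pos ha
  have := Real.Gamma_pos_of_pos hb
  have := Real.Gamma_pos_of_pos (add_pos ha hb)
  positivity

/-- Restricting Euler's integral to `[R, R + 1]` shows that `Γ` outgrows every geometric rate. -/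
lemma Gamma_lower {R s : ℝ} (hR : 0 < R) (hs : 0 < s) :
    R ^ s * (Real.exp (-(R + 1)) / (R + 1)) ≤ Real.Gamma s := by
  rw [Real.Gamma_eq_integral hs]
  have hI := Real.GammaIntegral_convergent hs
  have hsub : Icc R (R + 1) ⊆ Ioi (0 : ℝ) := fun x hx => lt_of_lt_of_le hR hx.1
  calc R ^ s * (Real.exp (-(R + 1)) / (R + 1))
      = ∫ _ in Icc R (R + 1), R ^ s * (Real.exp (-(R + 1)) / (R + 1)) := by simp
    _ ≤ ∫ x in Icc R (R + 1), Real.exp (-x) * x ^ (s - 1) := by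
        refine setIntegral_mono_on (integrableOn_const (by simp)) (hI.mono_set hsub) measurableSet_Icc fun x hx => ?_
        have hx0 : 0 < x := hsub hx
        have h1 : Real.exp (-(R + 1)) ≤ Real.exp (-x) := Real.exp_le_exp.2 (by linarith [hx.2])
        have h2 : R ^ s / (R + 1) ≤ x ^ (s - 1) := by
          rw [Real.rpow_sub_one hx0.ne']
          have := Real.rpow_le_rpow hR.le hx.1 hs.le
          have := hx.2
          gcongr
        calc _ = Real.exp (-(R + 1)) * (R ^ s / (R + 1)) := by ring
          _ ≤ _ := by gcongr
    _ ≤ ∫ x in Ioi 0, Real.exp (-x) * x ^ (s - 1) := by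
        refine setIntegral_mono_set hI ?_ hsub.eventuallyLE
        refine (ae_restrict_mem measurableSet_Ioi).mono fun x hx => ?_
        have : 0 < x := hx
        simp only [Pi.zero_apply]
        positivity

/-- The Mittag-Leffler series converges absolutely, by comparison with a geometric series. -/
lemma summable_ml {α β : ℝ} (hα : 0 < α) (hβ : 0 < β) (z : ℝ) :
    Summable fun j : ℕ => |z| ^ j / Real.Gamma (α * j + β) := by
  -- `R` is chosen so that `|z| / R ^ α < 1`.
  set R : ℝ := (|z| + 1) ^ (1 / α) with hRdef
  have hR : 0 < R := by positivity
  have hRα : R ^ α = |z| + 1 := by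
    rw [hRdef, ← Real.rpow_mul (by positivity)]; field_simp; simp
  set c : ℝ := Real.exp (-(R + 1)) / (R + 1) with hc
  have hc0 : 0 < c := by positivity
  have hgeo : Summable fun j : ℕ => (R ^ β * c)⁻¹ * (|z| / (|z| + 1)) ^ j := by
    refine (summable_geometric_of_lt_one (by positivity) ?_).mul_left _
    rw [div_lt_one (by positivity)]; linarith
  refine Summable.of_nonneg_of_le (fun j => ?_) (fun j => ?_) hgeo
  · have := Real.Gamma_pos_of_pos (show 0 < α * j + β by positivity)
    positivity
  · have h := Gamma_lower hR (show 0 < α * j + β by positivity)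
    rw [Real.rpow_add hR, Real.rpow_mul hR.le, hRα, Real.rpow_natCast] at h
    calc |z| ^ j / Real.Gamma (α * j + β) ≤ |z| ^ j / ((|z| + 1) ^ j * R ^ β * c) := by
          gcongr
      _ = _ := by rw [div_pow]; field_simp

lemma continuous_mlf {α β : ℝ} (hα : 0 < α) (hβ : 0 < β) : Continuous (mlf α β) := by
  refine continuous_iff_continuousAt.2 fun z => ?_
  have hM : ContinuousOn (mlf α β) (Icc (z - 1) (z + 1)) := by
    unfold mlf
    refine continuousOn_tsum (u := fun j : ℕ => |(|z| + 1)| ^ j / Real.Gamma (α * j + β))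
      (fun j => by fun_prop) (summable_ml hα hβ _) fun j x hx => ?_
    have hG := Real.Gamma_pos_of_pos (show 0 < α * j + β by positivity)
    rw [norm_div, norm_pow, Real.norm_eq_abs, Real.norm_of_nonneg hG.le]
    have : |x| ≤ |(|z| + 1)| := by
      rw [abs_of_nonneg (a := |z| + 1) (by positivity), abs_le]
      constructor
      · linarith [hx.1, neg_abs_le z]
      · linarith [hx.2, le_abs_self z]
    gcongr
  exact hM.continuousAt (Icc_mem_nhds (by linarith) (by linarith))

/-- The convolution kernel `x ^ (α - 1) E_{α,α}(ρ x ^ α)`. -/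
noncomputable def kern (α ρ x : ℝ) : ℝ := x ^ (α - 1) * mlf α α (ρ * x ^ α)

lemma intervalIntegrable_kern_mul {α ρ b x : ℝ} (hα : 0 < α) (hb : 0 < b) (hx : 0 < x) :
    IntervalIntegrable (fun y => kern α ρ y * (x - y) ^ (b - 1)) volume 0 x := by
  have h := (intervalIntegrable_beta hα hb hx).mul_continuousOn
    (g := fun y => mlf α α (ρ * y ^ α)) (Continuous.continuousOn ?_)
  · refine h.congr fun y _ => ?_
    simp only [kern]; ring
  · exact (continuous_mlf hα hα).comp
      (continuous_const.mul (Real.continuous_rpow_const hα.le))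

/-- Convolving the kernel with `x ^ (b - 1)`, term by term. -/
lemma hasSum_kern_conv {α ρ b x : ℝ} (hα : 0 < α) (hb : 0 < b) (hx : 0 < x) :
    HasSum (fun j : ℕ => ρ ^ j * x ^ (α * j + α + b - 1) *
        (Real.Gamma b / Real.Gamma (α * j + α + b)))
      (∫ y in (0 : ℝ)..x, kern α ρ y * (x - y) ^ (b - 1)) := by
  set F : ℕ → ℝ → ℝ := fun j y =>
    ρ ^ j / Real.Gamma (α * j + α) * (y ^ (α * j + α - 1) * (x - y) ^ (b - 1)) with hF
  have hs : ∀ j : ℕ, 0 < α * j + α := fun j => by positivity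
  have hFint : ∀ j, IntegrableOn (F j) (Ioc 0 x) := fun j =>
    (intervalIntegrable_iff_integrableOn_Ioc_of_le hx.le).1
      ((intervalIntegrable_beta (hs j) hb hx).const_mul _)
  have hval : ∀ (r : ℝ) (j : ℕ), ∫ y in Ioc 0 x,
      r ^ j / Real.Gamma (α * j + α) * (y ^ (α * j + α - 1) * (x - y) ^ (b - 1)) =
      r ^ j * x ^ (α * j + α + b - 1) * (Real.Gamma b / Real.Gamma (α * j + α + b)) := by
    intro r j
    rw [← intervalIntegral.integral_of_le hx.le, intervalIntegral.integral_const_mul,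
      integral_beta (hs j) hb hx]
    have := Real.Gamma_pos_of_pos (hs j)
    field_simp
  have hnorm : ∀ j, ∫ y in Ioc 0 x, ‖F j y‖ =
      |ρ| ^ j * x ^ (α * j + α + b - 1) * (Real.Gamma b / Real.Gamma (α * j + α + b)) := by
    intro j
    rw [← hval]
    refine setIntegral_congr_fun measurableSet_Ioc fun y hy => ?_
    have h1 := Real.Gamma_pos_of_pos (hs j)
    have h2 := Real.rpow_nonneg hy.1.le (α * j + α - 1)
    have h3 := Real.rpow_nonneg (sub_nonneg.2 hy.2) (b - 1)
    simp only [hF, norm_mul, norm_div, norm_pow, Real.norm_eq_abs, abs_of_nonneg h1.le,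
      abs_of_nonneg h2, abs_of_nonneg h3]
  have hsum : Summable fun j => ∫ y in Ioc 0 x, ‖F j y‖ := by
    simp_rw [hnorm]
    refine ((summable_ml hα (add_pos hα hb) (ρ * x ^ α)).mul_left
      (x ^ (α + b - 1) * Real.Gamma b)).congr fun j => ?_
    have e : α * j + α + b - 1 = α * j + (α + b - 1) := by ring
    rw [e, Real.rpow_add hx, Real.rpow_mul hx.le, Real.rpow_natCast, abs_mul,
      abs_of_nonneg (Real.rpow_nonneg hx.le α), mul_pow, add_assoc]
    ring
  have key := hasSum_integral_of_summable_integral_norm hFint hsum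
  simp_rw [hF, hval] at key
  rw [intervalIntegral.integral_of_le hx.le]
  refine (congrArg (HasSum _) ?_).mpr key
  refine setIntegral_congr_fun measurableSet_Ioc fun y hy => ?_
  simp only [kern, mlf]
  rw [← tsum_mul_left, ← tsum_mul_right]
  refine tsum_congr fun j => ?_
  have e : α * j + α - 1 = α * j + (α - 1) := by ring
  rw [e, Real.rpow_add hy.1, Real.rpow_mul hy.1.le, Real.rpow_natCast, mul_pow]
  ring

/-- The resolvent equation for the kernel: convolving with `x ^ (-α) / Γ(1 - α)` gives
`1 + ρ (1 * k)`. As power series in `ρ`, the coefficients of `1 * k` are those of the left side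
shifted by one index; the constant term of the left side is the summand `1`. -/
lemma resolvent {α ρ x : ℝ} (hα : 0 < α) (hα1 : α < 1) (hx : 0 < x) :
    ∫ y in (0 : ℝ)..x, kern α ρ y * (x - y) ^ (-α) =
      Real.Gamma (1 - α) * (1 + ρ * ∫ y in (0 : ℝ)..x, kern α ρ y) := by
  have h1 := hasSum_kern_conv (ρ := ρ) hα (sub_pos.2 hα1) hx
  have h2 := hasSum_kern_conv (ρ := ρ) hα one_pos hx
  simp only [sub_self, Real.rpow_zero, mul_one] at h2
  rw [show 1 - α - 1 = -α by ring] at h1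
  refine h1.unique ((hasSum_nat_add_iff' 1).1 ?_)
  have h3 := h2.mul_left (Real.Gamma (1 - α) * ρ)
  have hv : Real.Gamma (1 - α) * (1 + ρ * ∫ y in (0 : ℝ)..x, kern α ρ y) -
      ∑ j ∈ Finset.range 1, ρ ^ j * x ^ (α * j + α + (1 - α) - 1) *
        (Real.Gamma (1 - α) / Real.Gamma (α * j + α + (1 - α))) =
      Real.Gamma (1 - α) * ρ * ∫ y in (0 : ℝ)..x, kern α ρ y := by
    simp
    ring
  rw [hv]
  refine (congrArg (HasSum · _) (funext fun j => ?_)).mpr h3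
  push_cast
  rw [show α * ((j : ℝ) + 1) + α + (1 - α) = α * j + α + 1 by ring, Real.Gamma_one]
  ring

/-! ### Laplace convolution on a bounded interval -/

open scoped Convolution

/-- The Laplace convolution `(a * b)(x) = ∫_0^x a(y) b(x - y) dy`. -/
noncomputable def cv (a b : ℝ → ℝ) (x : ℝ) : ℝ := ∫ y in (0 : ℝ)..x, a y * b (x - y)

lemma cv_comm (a b : ℝ → ℝ) (x : ℝ) : cv a b x = cv b a x := by
  have h := intervalIntegral.integral_comp_sub_left (a := 0) (b := x)
    (fun y => b y * a (x - y)) x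
  simp only [sub_sub_cancel, sub_self, sub_zero] at h
  simp only [cv, ← h, mul_comm]

lemma cv_congr_left {a a' b : ℝ → ℝ} {x : ℝ} (hx : 0 ≤ x) (h : ∀ y ∈ Ioc 0 x, a y = a' y) :
    cv a b x = cv a' b x := by
  unfold cv
  refine intervalIntegral.integral_congr_ae (ae_of_all _ fun y hy => ?_)
  rw [uIoc_of_le hx] at hy
  simp only [h y hy]

lemma cv_one_left (a : ℝ → ℝ) (x : ℝ) : cv (fun _ => 1) a x = ∫ y in (0 : ℝ)..x, a y := by
  rw [cv_comm]; simp [cv]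

/-- Up to the abscissa `L`, the Laplace convolution is the convolution on the line of the
truncations to `(0, L]`. -/
lemma convolution_indicator (a b : ℝ → ℝ) {x L : ℝ} (hx : x ≤ L) :
    ((Ioc 0 L).indicator a ⋆[ContinuousLinearMap.mul ℝ ℝ, volume] (Ioc 0 L).indicator b) x =
      (Ioi 0).indicator (cv a b) x := by
  have h := congrFun (posConvolution_eq_convolution_indicator ((Iic L).indicator a)
    ((Iic L).indicator b) (ContinuousLinearMap.mul ℝ ℝ) volume) x
  simp only [indicator_indicator, Ioi_inter_Iic] at h
  rw [← h, posConvolution]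
  by_cases h0 : x ∈ Ioi (0 : ℝ)
  · rw [indicator_of_mem h0, indicator_of_mem h0]
    refine intervalIntegral.integral_congr fun y hy => ?_
    rw [uIcc_of_le (le_of_lt h0)] at hy
    have h1 : y ∈ Iic L := hy.2.trans hx
    have h2 : x - y ∈ Iic L := by simp only [mem_Iic]; linarith [hy.1]
    simp [indicator_of_mem h1, indicator_of_mem h2]
  · rw [indicator_of_notMem h0, indicator_of_notMem h0]

lemma norm_convolution_le {B C : ℝ → ℝ} {M : ℝ} (hB : Integrable B) (hM : ∀ x, |C x| ≤ M) (x : ℝ) :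
    ‖(B ⋆[ContinuousLinearMap.mul ℝ ℝ, volume] C) x‖ ≤ ∫ t, ‖B t‖ * M := by
  refine norm_integral_le_of_norm_le (hB.norm.mul_const M) (ae_of_all _ fun t => ?_)
  simp only [ContinuousLinearMap.mul_apply', norm_mul]
  exact mul_le_mul_of_nonneg_left (hM _) (norm_nonneg _)

lemma integrable_mul_convolution {A B C : ℝ → ℝ} {M : ℝ} (hA : Integrable A) (hB : Integrable B)
    (hC : Integrable C) (hM : ∀ x, |C x| ≤ M) (x : ℝ) :
    Integrable fun t => A t * (B ⋆[ContinuousLinearMap.mul ℝ ℝ, volume] C) (x - t) := by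
  have hm : Integrable (B ⋆[ContinuousLinearMap.mul ℝ ℝ, volume] C) :=
    hB.integrable_convolution _ hC
  exact hA.mul_bdd (hm.comp_sub_left x).aestronglyMeasurable
    (ae_of_all _ fun t => norm_convolution_le hB hM _)

lemma convolution_assoc_bdd {A B C : ℝ → ℝ} {M : ℝ} (hA : Integrable A) (hB : Integrable B)
    (hC : Integrable C) (hM : ∀ x, |C x| ≤ M) (x : ℝ) :
    ((A ⋆[ContinuousLinearMap.mul ℝ ℝ, volume] B) ⋆[ContinuousLinearMap.mul ℝ ℝ, volume] C) x =
    (A ⋆[ContinuousLinearMap.mul ℝ ℝ, volume]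
      (B ⋆[ContinuousLinearMap.mul ℝ ℝ, volume] C)) x := by
  refine convolution_assoc _ _ _ _ (fun a b c => by simp [mul_assoc]) hA.aestronglyMeasurable
    hB.aestronglyMeasurable hC.aestronglyMeasurable (hA.ae_convolution_exists _ hB)
    (hB.norm.ae_convolution_exists _ hC.norm) ?_
  exact integrable_mul_convolution hA.norm hB.norm hC.norm (M := M) (fun x => by simpa using hM x) x

section Conv

variable {a b c : ℝ → ℝ} {L : ℝ}

lemma exists_bound_indicator (hc : ContinuousOn c (Icc 0 L)) :
    ∃ M, ∀ x, |(Ioc 0 L).indicator c x| ≤ M := by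
  obtain ⟨M, hM⟩ := isCompact_Icc.exists_bound_of_continuousOn hc
  refine ⟨max M 0, fun x => ?_⟩
  by_cases hx : x ∈ Ioc 0 L
  · rw [indicator_of_mem hx]
    exact le_max_of_le_left (hM x (Ioc_subset_Icc_self hx))
  · rw [indicator_of_notMem hx]; simp

lemma integrableOn_of_continuousOn (hc : ContinuousOn c (Icc 0 L)) : IntegrableOn c (Ioc 0 L) :=
  hc.integrableOn_Icc.mono_set Ioc_subset_Icc_self

lemma integrableOn_cv (ha : IntegrableOn a (Ioc 0 L)) (hb : IntegrableOn b (Ioc 0 L)) :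
    IntegrableOn (cv a b) (Ioc 0 L) := by
  have h := ((ha.integrable_indicator measurableSet_Ioc).integrable_convolution
    (ContinuousLinearMap.mul ℝ ℝ) (hb.integrable_indicator measurableSet_Ioc)).integrableOn
    (s := Ioc 0 L)
  refine h.congr_fun (fun x hx => ?_) measurableSet_Ioc
  rw [convolution_indicator a b hx.2, indicator_of_mem (show x ∈ Ioi 0 from hx.1)]

lemma indicator_mul_convolution (t : ℝ) (ht : t ≠ L) :
    (Ioc 0 L).indicator a t * ((Ioc 0 L).indicator b ⋆[ContinuousLinearMap.mul ℝ ℝ, volume]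
      (Ioc 0 L).indicator c) (L - t) =
    (Ioc 0 L).indicator (fun y => a y * cv b c (L - y)) t := by
  by_cases h : t ∈ Ioc 0 L
  · have h' : L - t ∈ Ioi (0 : ℝ) := by
      simpa using lt_of_le_of_ne h.2 ht
    rw [convolution_indicator b c (by linarith [h.1]), indicator_of_mem h, indicator_of_mem h',
      indicator_of_mem h]
  · simp [indicator_of_notMem h]

lemma intervalIntegrable_mul_cv (hL : 0 < L) (ha : IntegrableOn a (Ioc 0 L))
    (hb : IntegrableOn b (Ioc 0 L)) (hc : ContinuousOn c (Icc 0 L)) :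
    IntervalIntegrable (fun y => a y * cv b c (L - y)) volume 0 L := by
  obtain ⟨M, hM⟩ := exists_bound_indicator hc
  have h := integrable_mul_convolution (ha.integrable_indicator measurableSet_Ioc)
    (hb.integrable_indicator measurableSet_Ioc)
    ((integrableOn_of_continuousOn hc).integrable_indicator measurableSet_Ioc) hM L
  rw [intervalIntegrable_iff_integrableOn_Ioc_of_le hL.le,
    ← integrable_indicator_iff measurableSet_Ioc]
  refine h.congr ?_
  filter_upwards [volume.ae_ne L] with t ht using indicator_mul_convolution t ht

/-- Associativity holds at every point, not just almost everywhere, when the last factor is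
continuous on `[0, L]`, since it is then bounded. -/
lemma cv_assoc (hL : 0 < L) (ha : IntegrableOn a (Ioc 0 L))
    (hb : IntegrableOn b (Ioc 0 L)) (hc : ContinuousOn c (Icc 0 L)) :
    cv (cv a b) c L = cv a (cv b c) L := by
  obtain ⟨M, hM⟩ := exists_bound_indicator hc
  have h := convolution_assoc_bdd (ha.integrable_indicator measurableSet_Ioc)
    (hb.integrable_indicator measurableSet_Ioc)
    ((integrableOn_of_continuousOn hc).integrable_indicator measurableSet_Ioc) hM L
  have hR : ((Ioc 0 L).indicator a ⋆[ContinuousLinearMap.mul ℝ ℝ, volume]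
      ((Ioc 0 L).indicator b ⋆[ContinuousLinearMap.mul ℝ ℝ, volume] (Ioc 0 L).indicator c)) L =
      cv a (cv b c) L := by
    rw [convolution, cv, intervalIntegral.integral_of_le hL.le,
      ← integral_indicator measurableSet_Ioc]
    refine integral_congr_ae ?_
    filter_upwards [volume.ae_ne L] with t ht using indicator_mul_convolution t ht
  have hLft : (((Ioc 0 L).indicator a ⋆[ContinuousLinearMap.mul ℝ ℝ, volume]
      (Ioc 0 L).indicator b) ⋆[ContinuousLinearMap.mul ℝ ℝ, volume] (Ioc 0 L).indicator c) L =
      cv (cv a b) c L := by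
    rw [convolution, cv, intervalIntegral.integral_of_le hL.le,
      ← integral_indicator measurableSet_Ioc]
    refine integral_congr_ae ?_
    filter_upwards [volume.ae_ne L] with t ht
    simp only [ContinuousLinearMap.mul_apply']
    rcases le_or_gt t 0 with h0 | h0
    · rw [convolution_indicator a b (h0.trans hL.le), indicator_of_notMem (by simpa using h0),
        zero_mul, indicator_of_notMem fun h : t ∈ Ioc 0 L => h.1.not_ge h0]
    · rcases lt_or_ge L t with h1 | h1
      · rw [indicator_of_notMem (s := Ioc 0 L) (a := L - t) (by simp [h1.le]),
          indicator_of_notMem (by simp [h1]), mul_zero]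
      · have h2 : L - t ∈ Ioc 0 L :=
          ⟨sub_pos.2 (lt_of_le_of_ne h1 ht), by linarith⟩
        rw [convolution_indicator a b h1, indicator_of_mem (show t ∈ Ioi 0 from h0),
          indicator_of_mem h2, indicator_of_mem (show t ∈ Ioc 0 L from ⟨h0, h1⟩)]
  rw [← hR, ← hLft, h]

end Conv

/-! ### The convolution of the kernel with a `C¹` function -/

section Caputo

variable {α ρ L : ℝ} {g g' : ℝ → ℝ}

lemma integrableOn_kern (hα : 0 < α) (hL : 0 < L) : IntegrableOn (kern α ρ) (Ioc 0 L) := by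
  have h := intervalIntegrable_kern_mul (ρ := ρ) hα one_pos hL
  simp only [sub_self, Real.rpow_zero, mul_one] at h
  exact (intervalIntegrable_iff_integrableOn_Ioc_of_le hL.le).1 h

/-- The almost everywhere derivative `g(0) k + k * g'` of `k * g`, where `k` is the kernel and `g`
has derivative `g'`. -/
noncomputable def dconv (α ρ : ℝ) (g g' : ℝ → ℝ) (x : ℝ) : ℝ :=
  g 0 * kern α ρ x + cv (kern α ρ) g' x

lemma integrableOn_dconv (hα : 0 < α) (hL : 0 < L) (hg' : ContinuousOn g' (Icc 0 L)) :
    IntegrableOn (dconv α ρ g g') (Ioc 0 L) :=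
  ((integrableOn_kern hα hL).const_mul _).add
    (integrableOn_cv (integrableOn_kern hα hL) (integrableOn_of_continuousOn hg'))

/-- `k * g = g(0) (k * 1) + k * (1 * g')`, by substituting `g = g(0) + 1 * g'`. -/
lemma cv_kern_eq (hα : 0 < α) (hL : 0 < L) (hg' : ContinuousOn g' (Icc 0 L))
    (hg : ∀ x ∈ Icc 0 L, g x = g 0 + ∫ y in (0 : ℝ)..x, g' y) :
    cv (kern α ρ) g L =
      g 0 * (∫ y in (0 : ℝ)..L, kern α ρ y) + cv (kern α ρ) (cv (fun _ => 1) g') L := by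
  have hk := integrableOn_kern (ρ := ρ) hα hL
  have hki := (intervalIntegrable_iff_integrableOn_Ioc_of_le hL.le).2 hk
  have h1 := intervalIntegrable_mul_cv hL hk (b := fun _ => 1) (by simp) hg'
  rw [← intervalIntegral.integral_const_mul]
  unfold cv at h1 ⊢
  rw [← intervalIntegral.integral_add (hki.const_mul _) h1]
  refine intervalIntegral.integral_congr fun y hy => ?_
  rw [uIcc_of_le hL.le] at hy
  have h2 := cv_one_left g' (L - y)
  unfold cv at h2
  simp only [h2]
  rw [hg (L - y) ⟨by linarith [hy.2], by linarith [hy.1]⟩]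
  ring

lemma cv_kern_eq_integral (hα : 0 < α) (hL : 0 < L) (hg' : ContinuousOn g' (Icc 0 L))
    (hg : ∀ x ∈ Icc 0 L, g x = g 0 + ∫ y in (0 : ℝ)..x, g' y) :
    cv (kern α ρ) g L = ∫ y in (0 : ℝ)..L, dconv α ρ g g' y := by
  have hk := integrableOn_kern (ρ := ρ) hα hL
  have hki := (intervalIntegrable_iff_integrableOn_Ioc_of_le hL.le).2 hk
  have hci := (intervalIntegrable_iff_integrableOn_Ioc_of_le hL.le).2
    (integrableOn_cv hk (integrableOn_of_continuousOn hg'))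
  have h1 : IntegrableOn (fun _ => (1 : ℝ)) (Ioc 0 L) := by simp
  unfold dconv
  rw [cv_kern_eq hα hL hg' hg, intervalIntegral.integral_add (hki.const_mul _) hci,
    intervalIntegral.integral_const_mul, ← cv_assoc hL hk h1 hg', ← cv_one_left (cv _ _),
    ← cv_assoc hL h1 hk hg', funext (cv_comm (kern α ρ) fun _ => 1)]

/-- The Caputo integral of `k * g`, with its derivative written out: convolve with `x ^ (-α)`,
move that factor onto `k` by associativity, and use the resolvent equation. -/
lemma integral_dconv (hα : 0 < α) (hα1 : α < 1) (hL : 0 < L) (hg' : ContinuousOn g' (Icc 0 L))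
    (hg : ∀ x ∈ Icc 0 L, g x = g 0 + ∫ y in (0 : ℝ)..x, g' y) :
    ∫ y in (0 : ℝ)..L, (L - y) ^ (-α) * dconv α ρ g g' y =
      Real.Gamma (1 - α) * (ρ * cv (kern α ρ) g L + g L) := by
  have hk := integrableOn_kern (ρ := ρ) hα hL
  have h1 : IntegrableOn (fun _ => (1 : ℝ)) (Ioc 0 L) := by simp
  set w : ℝ → ℝ := fun y => y ^ (-α) with hw
  have hwi : IntegrableOn w (Ioc 0 L) :=
    (intervalIntegrable_iff_integrableOn_Ioc_of_le hL.le).1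
      (intervalIntegral.intervalIntegrable_rpow' (by linarith))
  have hres : ∀ x ∈ Ioc 0 L, cv w (kern α ρ) x =
      Real.Gamma (1 - α) * (1 + ρ * cv (fun _ => 1) (kern α ρ) x) := fun x hx => by
    rw [cv_comm, cv_one_left]; exact resolvent hα hα1 hx.1
  have hA : IntervalIntegrable (fun y => kern α ρ y * w (L - y)) volume 0 L := by
    have h := intervalIntegrable_kern_mul (ρ := ρ) hα (sub_pos.2 hα1) hL
    rwa [show 1 - α - 1 = -α by ring] at h
  have hB : IntervalIntegrable (fun y => cv (kern α ρ) g' y * w (L - y)) volume 0 L := by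
    have h := (intervalIntegrable_mul_cv hL hwi hk hg').comp_sub_left L
    simp only [sub_self, sub_zero, sub_sub_cancel] at h
    exact h.symm.congr fun y _ => mul_comm _ _
  have hgr : ContinuousOn (fun y => g' (L - y)) (uIcc 0 L) := by
    rw [uIcc_of_le hL.le]
    exact hg'.comp (by fun_prop) fun y hy => ⟨by linarith [hy.2], by linarith [hy.1]⟩
  have hC : IntervalIntegrable (fun y => cv (fun _ => 1) (kern α ρ) y * g' (L - y))
      volume 0 L :=
    ((intervalIntegrable_iff_integrableOn_Ioc_of_le hL.le).2
      (integrableOn_cv h1 hk)).mul_continuousOn hgr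
  have hsplit : ∫ y in (0 : ℝ)..L, (L - y) ^ (-α) * dconv α ρ g g' y =
      g 0 * cv (kern α ρ) w L + cv (cv (kern α ρ) g') w L := by
    rw [cv, cv, ← intervalIntegral.integral_const_mul,
      ← intervalIntegral.integral_add (hA.const_mul _) hB]
    refine intervalIntegral.integral_congr fun y _ => ?_
    simp only [dconv, hw]
    ring
  have hmove : cv (cv (kern α ρ) g') w L = Real.Gamma (1 - α) *
      (cv (fun _ => 1) g' L + ρ * cv (cv (fun _ => 1) (kern α ρ)) g' L) := by
    rw [cv_comm, ← cv_assoc hL hwi hk hg', cv_congr_left hL.le hres]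
    unfold cv at hC ⊢
    rw [← intervalIntegral.integral_const_mul ρ, ← intervalIntegral.integral_add
      (by simpa using hgr.intervalIntegrable) (hC.const_mul _),
      ← intervalIntegral.integral_const_mul]
    refine intervalIntegral.integral_congr fun y _ => ?_
    ring
  rw [hsplit, hmove, cv_comm, hres L ⟨hL, le_rfl⟩, cv_kern_eq hα hL hg' hg,
    hg L ⟨hL.le, le_rfl⟩, ← cv_assoc hL hk h1 hg', funext (cv_comm (kern α ρ) fun _ => 1),
    cv_one_left, cv_one_left]
  ring

end Caputo

end CaputoML

/-- For `0 < α < 1`, `ρ ∈ ℝ`, `0 ≤ t_k < T` and `f` continuously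
differentiable on `[t_k,T]`, set
`Ψ(t) = ∫_{t_k}^t (t−θ)^{α−1} E_{α,α}(ρ (t−θ)^α) f(θ) dθ`. Then for every
`t ∈ (t_k,T]`, `({}_{t_k}D_t^α Ψ)(t) = ρ Ψ(t) + f(t)`. -/
theorem caputo_convolution_shifted {α ρ tk T : ℝ} (hα0 : 0 < α) (hα1 : α < 1)
    (htk : 0 ≤ tk) (hT : tk < T)
    (f : ℝ → ℝ) (hf : ContDiffOn ℝ 1 f (Set.Icc tk T)) :
    ∀ t ∈ Set.Ioc tk T,
      (1 / Real.Gamma (1 - α)) *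
          ∫ s in tk..t, (t - s) ^ (-α) *
            deriv (fun r : ℝ =>
              ∫ θ in tk..r, (r - θ) ^ (α - 1) * mlf α α (ρ * (r - θ) ^ α) * f θ) s =
        ρ * (∫ θ in tk..t, (t - θ) ^ (α - 1) * mlf α α (ρ * (t - θ) ^ α) * f θ) +
          f t := by
  intro t ht
  obtain ⟨L, hLdef⟩ : ∃ L, L = t - tk := ⟨_, rfl⟩
  have hL : 0 < L := by rw [hLdef]; exact sub_pos.2 ht.1
  -- Only values on `[tk, t]` matter, so everything is translated to `[0, L]`.
  set g : ℝ → ℝ := fun y => f (tk + y) with hg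
  set g' : ℝ → ℝ := fun y => derivWithin f (Set.Icc tk T) (tk + y) with hg'
  have hmaps : Set.MapsTo (fun y => tk + y) (Set.Icc 0 L) (Set.Icc tk T) := fun y hy =>
    ⟨by linarith [hy.1], by linarith [hy.2, ht.2]⟩
  have hg'c : ContinuousOn g' (Set.Icc 0 L) :=
    (hf.continuousOn_derivWithin (uniqueDiffOn_Icc hT) le_rfl).comp (by fun_prop) hmaps
  have hgc : ContinuousOn g (Set.Icc 0 L) := hf.continuousOn.comp (by fun_prop) hmaps
  have hgd : ∀ x ∈ Set.Ioo 0 L, HasDerivAt g (g' x) x := fun x hx => by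
    have hn : Set.Icc tk T ∈ nhds (tk + x) :=
      Icc_mem_nhds (by linarith [hx.1]) (by linarith [hx.2, ht.2])
    have hd := ((hf.differentiableOn one_ne_zero) _
      (hmaps (Set.Ioo_subset_Icc_self hx))).hasDerivWithinAt.hasDerivAt hn
    exact hd.comp_const_add tk x
  have hFTC : ∀ x ∈ Set.Icc 0 L, g x = g 0 + ∫ y in (0 : ℝ)..x, g' y := fun x hx => by
    have hsub : Set.Icc 0 x ⊆ Set.Icc 0 L := Set.Icc_subset_Icc_right hx.2
    rw [intervalIntegral.integral_eq_sub_of_hasDerivAt_of_le hx.1 (hgc.mono hsub)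
      (fun y hy => hgd y ⟨hy.1, hy.2.trans_le hx.2⟩)
      ((hg'c.mono hsub).intervalIntegrable_of_Icc hx.1)]
    ring
  have hΨ : ∀ r, (∫ θ in tk..r, (r - θ) ^ (α - 1) * mlf α α (ρ * (r - θ) ^ α) * f θ) =
      CaputoML.cv (CaputoML.kern α ρ) g (r - tk) := fun r => by
    have h := intervalIntegral.integral_comp_sub_left (a := tk) (b := r)
      (fun y => CaputoML.kern α ρ y * g (r - tk - y)) r
    rw [sub_self] at h
    rw [CaputoML.cv, ← h]
    refine intervalIntegral.integral_congr fun θ _ => ?_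
    simp only [CaputoML.kern, hg]
    congr 2
    ring
  simp_rw [hΨ]
  have hΦ := CaputoML.integrableOn_dconv (α := α) (ρ := ρ) (g := g) hα0 hL hg'c
  have hprim : ∀ x ∈ Set.Ioo 0 L, CaputoML.cv (CaputoML.kern α ρ) g x =
      ∫ y in (0 : ℝ)..x, CaputoML.dconv α ρ g g' y := fun x hx => by
    have hsub : Set.Icc 0 x ⊆ Set.Icc 0 L := Set.Icc_subset_Icc_right hx.2.le
    exact CaputoML.cv_kern_eq_integral hα0 hx.1 (hg'c.mono hsub) fun y hy => hFTC y (hsub hy)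
  have hderiv : ∀ᵐ x : ℝ, x ∈ Set.Ioo 0 L →
      deriv (CaputoML.cv (CaputoML.kern α ρ) g) x = CaputoML.dconv α ρ g g' x := by
    have hi := (intervalIntegrable_iff_integrableOn_Ioc_of_le hL.le).2 hΦ
    filter_upwards [hi.ae_hasDerivAt_integral] with x hx hxm
    rw [Set.uIcc_of_le hL.le] at hx
    refine ((hx (Set.Ioo_subset_Icc_self hxm) 0 ⟨le_rfl, hL.le⟩).congr_of_eventuallyEq ?_).deriv
    filter_upwards [Ioo_mem_nhds hxm.1 hxm.2] with y hy using hprim y hy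
  have hshift : ∫ s in tk..t, (t - s) ^ (-α) *
        deriv (fun r => CaputoML.cv (CaputoML.kern α ρ) g (r - tk)) s =
      ∫ y in (0 : ℝ)..L, (L - y) ^ (-α) * CaputoML.dconv α ρ g g' y := by
    have h := intervalIntegral.integral_comp_sub_right (a := tk) (b := t)
      (fun y => (L - y) ^ (-α) * deriv (CaputoML.cv (CaputoML.kern α ρ) g) y) tk
    rw [sub_self, ← hLdef] at h
    simp_rw [deriv_comp_sub_const]
    have he : ∀ s, L - (s - tk) = t - s := fun s => by rw [hLdef]; ring
    simp only [he] at h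
    rw [h]
    refine intervalIntegral.integral_congr_ae ?_
    filter_upwards [hderiv, MeasureTheory.volume.ae_ne L] with y hy hyL hym
    rw [Set.uIoc_of_le hL.le] at hym
    rw [hy ⟨hym.1, lt_of_le_of_ne hym.2 hyL⟩]
  have hgL : g L = f t := by simp only [hg]; rw [hLdef]; congr 1; ring
  rw [hshift, CaputoML.integral_dconv hα0 hα1 hL hg'c hFTC, ← hLdef, hgL, ← mul_assoc,
    one_div_mul_cancel (Real.Gamma_pos_of_pos (sub_pos.2 hα1)).ne', one_mul]
end
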